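/- Let n ≥ 2, let U ⊆ ℝⁿ be open, let D be a torsion-free affine connection on U with smooth Christoffel symbols Γ_{ij}^k, and let p ∈ U. If for some μ ∈ ℝ with μ ≠ −1/(n−1) there exists a connected open neighborhood V ⊆ U of p such that the space of smooth solutions on V of the affine quasi-Einstein equation ∂_i∂_j h − Σ_k Γ_{ij}^k ∂_k h = μ h (ρ_s)_{ij} has dimension exactly n + 1, then the Ricci tensor of D vanishes identically on some open neighborhood of p, i.e. ρ_{ij} = 0 there for all i,j. -/

import Mathlib

/-!
At a point `x`, a solution `h` is determined on the connected set `V` by its 1-jet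
`(h x, ∂₁h x, …, ∂ₙh x)`: the equation expresses the derivative of the 1-jet linearly in the
1-jet, with continuous coefficients, so the zero set of the 1-jet is open as well as closed
(`eq_zero_of_norm_fderiv_le`, `jet_eq_zero`). Hence if the solution space has dimension `n + 1`,
every 1-jet at `x` is realised (`exists_solution`).

Differentiating `∂ᵢ∂ⱼh = Σₖ Γᵢⱼᵏ ∂ₖh + μ h (ρₛ)ᵢⱼ` in the direction `l` and antisymmetrising in
`l, i`, the left side disappears. For a solution with `h x = 0` and `∂ₖh x = δₖₘ` this says
`R_{lij}^m + μ (δₗᵐ (ρₛ)ᵢⱼ − δᵢᵐ (ρₛ)ₗⱼ) = 0` (`integrability`). Contracting `m = l` gives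
`ρᵢⱼ + μ (n − 1) (ρₛ)ᵢⱼ = 0` (`ricci_add`). Symmetrising, `(1 + μ (n − 1)) ρₛ = 0`, so `ρₛ = 0`
because `μ ≠ −1/(n−1)`, and then `ρ = 0` on all of `V`.
-/

open scoped ContDiff

/-- Partial derivative `∂_i f` in coordinates on `ℝⁿ`. -/
noncomputable def pd {n : ℕ} (i : Fin n) (f : (Fin n → ℝ) → ℝ) : (Fin n → ℝ) → ℝ :=
  fun x => fderiv ℝ f x (Pi.single i 1)

/-- Hessian `(Hess_h)_{ij} = ∂_i∂_j h − Σ_k Γ_{ij}^k ∂_k h` of `h` w.r.t. the connection `Γ`. -/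
noncomputable def hessD {n : ℕ} (Γ : Fin n → Fin n → Fin n → (Fin n → ℝ) → ℝ)
    (h : (Fin n → ℝ) → ℝ) (i j : Fin n) : (Fin n → ℝ) → ℝ :=
  fun x => pd i (pd j h) x - ∑ k, Γ i j k x * pd k h x

/-- Ricci tensor
`ρ_{ij} = Σ_k (∂_k Γ_{ij}^k − ∂_i Γ_{kj}^k) + Σ_{k,l} (Γ_{kl}^k Γ_{ij}^l − Γ_{il}^k Γ_{kj}^l)`. -/
noncomputable def ricciD {n : ℕ} (Γ : Fin n → Fin n → Fin n → (Fin n → ℝ) → ℝ)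
    (i j : Fin n) : (Fin n → ℝ) → ℝ :=
  fun x => (∑ k, (pd k (Γ i j k) x - pd i (Γ k j k) x))
    + ∑ k, ∑ l, (Γ k l k x * Γ i j l x - Γ i l k x * Γ k j l x)

/-- Symmetrized Ricci tensor `(ρ_s)_{ij} = (ρ_{ij} + ρ_{ji})/2`. -/
noncomputable def ricciSymD {n : ℕ} (Γ : Fin n → Fin n → Fin n → (Fin n → ℝ) → ℝ)
    (i j : Fin n) : (Fin n → ℝ) → ℝ :=
  fun x => (ricciD Γ i j x + ricciD Γ j i x) / 2

/-- The set of smooth solutions on `V` of the affine quasi-Einstein equation with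
eigenvalue `μ` for the connection `Γ`. -/
def solSet {n : ℕ} (V : Set (Fin n → ℝ))
    (Γ : Fin n → Fin n → Fin n → (Fin n → ℝ) → ℝ) (μ : ℝ) : Set ((Fin n → ℝ) → ℝ) :=
  {h | ContDiffOn ℝ ∞ h V ∧ ∀ x ∈ V, ∀ i j, hessD Γ h i j x = μ * h x * ricciSymD Γ i j x}

/-! ### Calculus of partial derivatives -/

section PartialDerivatives

variable {n : ℕ} {V : Set (Fin n → ℝ)} {x : Fin n → ℝ}

lemma contDiffOn_pd (hV : IsOpen V) {f : (Fin n → ℝ) → ℝ} (hf : ContDiffOn ℝ ∞ f V)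
    (i : Fin n) : ContDiffOn ℝ ∞ (pd i f) V :=
  (hf.fderiv_of_isOpen hV (m := ∞) (by simp)).clm_apply contDiffOn_const

lemma differentiableAt_of_contDiffOn (hV : IsOpen V) {f : (Fin n → ℝ) → ℝ}
    (hf : ContDiffOn ℝ ∞ f V) (hx : x ∈ V) : DifferentiableAt ℝ f x :=
  (hf.contDiffAt (hV.mem_nhds hx)).differentiableAt (by simp)

lemma pd_comm (hV : IsOpen V) {f : (Fin n → ℝ) → ℝ} (hf : ContDiffOn ℝ ∞ f V) (hx : x ∈ V)
    (i j : Fin n) : pd i (pd j f) x = pd j (pd i f) x := by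
  have hd : DifferentiableAt ℝ (fderiv ℝ f) x :=
    ((hf.fderiv_of_isOpen hV (m := ∞) (by simp)).contDiffAt (hV.mem_nhds hx)).differentiableAt
      (by simp)
  have key : ∀ a b : Fin n,
      pd a (pd b f) x = fderiv ℝ (fderiv ℝ f) x (Pi.single a 1) (Pi.single b 1) := by
    intro a b
    have := (hd.hasFDerivAt.clm_apply
      (hasFDerivAt_const (Pi.single b (1 : ℝ) : Fin n → ℝ) x)).fderiv
    change fderiv ℝ (fun y => fderiv ℝ f y (Pi.single b 1)) x (Pi.single a 1) = _
    rw [this]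
    simp
  rw [key, key]
  exact ((hf.contDiffAt (hV.mem_nhds hx)).isSymmSndFDerivAt
    (by simpa using (WithTop.coe_le_coe.2 le_top : ((2 : ℕ∞) : WithTop ℕ∞) ≤ ∞))) _ _

lemma pd_add {f g : (Fin n → ℝ) → ℝ} (hf : DifferentiableAt ℝ f x)
    (hg : DifferentiableAt ℝ g x) (i : Fin n) :
    pd i (fun y => f y + g y) x = pd i f x + pd i g x := by
  simp [pd, fderiv_fun_add hf hg]

lemma pd_mul {f g : (Fin n → ℝ) → ℝ} (hf : DifferentiableAt ℝ f x)
    (hg : DifferentiableAt ℝ g x) (i : Fin n) :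
    pd i (fun y => f y * g y) x = pd i f x * g x + f x * pd i g x := by
  simp [pd, fderiv_fun_mul hf hg]; ring

lemma pd_const_mul {f : (Fin n → ℝ) → ℝ} (hf : DifferentiableAt ℝ f x) (c : ℝ) (i : Fin n) :
    pd i (fun y => c * f y) x = c * pd i f x := by
  simp [pd, fderiv_const_mul hf]

lemma pd_sum {f : Fin n → (Fin n → ℝ) → ℝ} (hf : ∀ k, DifferentiableAt ℝ (f k) x) (i : Fin n) :
    pd i (fun y => ∑ k, f k y) x = ∑ k, pd i (f k) x := by
  simp [pd, fderiv_fun_sum (fun k _ => hf k)]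

lemma pd_congr (hV : IsOpen V) (hx : x ∈ V) {f g : (Fin n → ℝ) → ℝ}
    (h : ∀ y ∈ V, f y = g y) (i : Fin n) : pd i f x = pd i g x := by
  have : f =ᶠ[nhds x] g := Filter.eventuallyEq_of_mem (hV.mem_nhds hx) h
  simp [pd, this.fderiv_eq]

lemma contDiffOn_ricciSymD (hV : IsOpen V) {Γ : Fin n → Fin n → Fin n → (Fin n → ℝ) → ℝ}
    (hΓ : ∀ i j k, ContDiffOn ℝ ∞ (Γ i j k) V) (i j : Fin n) :
    ContDiffOn ℝ ∞ (ricciSymD Γ i j) V := by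
  have h : ∀ a b, ContDiffOn ℝ ∞ (ricciD Γ a b) V := by
    intro a b
    refine (ContDiffOn.sum fun k _ => ?_).add
      (ContDiffOn.sum fun k _ => ContDiffOn.sum fun l _ => ?_)
    · exact (contDiffOn_pd hV (hΓ _ _ _) _).sub (contDiffOn_pd hV (hΓ _ _ _) _)
    · exact ((hΓ _ _ _).mul (hΓ _ _ _)).sub ((hΓ _ _ _).mul (hΓ _ _ _))
  exact ((h i j).add (h j i)).div_const 2

end PartialDerivatives

/-! ### Unique continuation -/

lemma opNorm_le_sum_single {n : ℕ} {X : Type*} [NormedAddCommGroup X] [NormedSpace ℝ X]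
    (L : (Fin n → ℝ) →L[ℝ] X) : ‖L‖ ≤ ∑ i, ‖L (Pi.single i 1)‖ := by
  refine L.opNorm_le_bound (Finset.sum_nonneg fun _ _ => norm_nonneg _) fun v => ?_
  have hv : L v = ∑ i, v i • L (Pi.single i 1) := by
    conv_lhs => rw [pi_eq_sum_univ' v]
    rw [map_sum]
    refine Finset.sum_congr rfl fun i _ => ?_
    rw [map_smul]
  rw [hv, Finset.sum_mul]
  refine (norm_sum_le _ _).trans (Finset.sum_le_sum fun i _ => ?_)
  rw [norm_smul, mul_comm]
  exact mul_le_mul_of_nonneg_left (norm_le_pi_norm v i) (norm_nonneg _)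

/-- Unique continuation for a differential inequality `‖G'‖ ≤ c ‖G‖` on a connected open set.
The zero set of `G` is open: on a ball of radius `r` about a zero, the mean value inequality
bounds the maximum `M` of `‖G‖` by `sup c * r * M`, which forces `M = 0` for small `r`. -/
lemma eq_zero_of_norm_fderiv_le {n : ℕ} {X : Type*} [NormedAddCommGroup X] [NormedSpace ℝ X]
    {V : Set (Fin n → ℝ)} (hV : IsOpen V) (hc : IsPreconnected V) {G : (Fin n → ℝ) → X}
    (hG : ∀ y ∈ V, DifferentiableAt ℝ G y) {c : (Fin n → ℝ) → ℝ} (hcc : ContinuousOn c V)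
    (hb : ∀ y ∈ V, ‖fderiv ℝ G y‖ ≤ c y * ‖G y‖) {x : Fin n → ℝ} (hx : x ∈ V) (h0 : G x = 0) :
    ∀ y ∈ V, G y = 0 := by
  have hGc : ContinuousOn G V := fun y hy => (hG y hy).continuousAt.continuousWithinAt
  have hopen : IsOpen (V ∩ {y | G y = 0}) := by
    rw [Metric.isOpen_iff]
    rintro y₀ ⟨hy₀, hz₀⟩
    set C := |c y₀| + 1 with hC
    have hCpos : 0 < C := by positivity
    have hev : ∀ᶠ y in nhds y₀, y ∈ V ∧ c y ≤ C := by
      refine (hV.eventually_mem hy₀).and ?_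
      have : c y₀ < C := by rw [hC]; linarith [le_abs_self (c y₀)]
      filter_upwards [(hcc.continuousAt (hV.mem_nhds hy₀)).eventually_lt_const this] with y hy
      exact hy.le
    obtain ⟨ε, hε, hball⟩ := Metric.eventually_nhds_iff_ball.1 hev
    set r := min (ε / 2) (1 / (2 * C)) with hr
    have hrpos : 0 < r := by positivity
    have hrε : Metric.closedBall y₀ r ⊆ Metric.ball y₀ ε :=
      Metric.closedBall_subset_ball (lt_of_le_of_lt (min_le_left _ _) (by linarith))
    have hCr : C * r ≤ 1 / 2 := by
      calc C * r ≤ C * (1 / (2 * C)) := by gcongr; exact min_le_right _ _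
        _ = 1 / 2 := by field_simp
    obtain ⟨y₁, hy₁, hmax⟩ := (isCompact_closedBall y₀ r).exists_isMaxOn
      ⟨y₀, Metric.mem_closedBall_self hrpos.le⟩
      ((hGc.mono fun y hy => (hball y (hrε hy)).1).norm)
    have hmv := (convex_closedBall y₀ r).norm_image_sub_le_of_norm_fderiv_le (𝕜 := ℝ) (f := G)
      (C := C * ‖G y₁‖) (fun y hy => hG y (hball y (hrε hy)).1)
      (fun y hy => (hb y (hball y (hrε hy)).1).trans
        (mul_le_mul (hball y (hrε hy)).2 (hmax hy) (norm_nonneg _) hCpos.le))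
      (Metric.mem_closedBall_self hrpos.le) hy₁
    have hz₀' : G y₀ = 0 := hz₀
    rw [hz₀', sub_zero] at hmv
    have hd : ‖y₁ - y₀‖ ≤ r := by rwa [← dist_eq_norm]
    have hM : ‖G y₁‖ ≤ 0 := by
      have h1 : C * ‖G y₁‖ * ‖y₁ - y₀‖ ≤ C * ‖G y₁‖ * r := by gcongr
      nlinarith [norm_nonneg (G y₁)]
    refine ⟨r, hrpos, fun y hy => ?_⟩
    have hy' := Metric.ball_subset_closedBall hy
    exact ⟨(hball y (hrε hy')).1, norm_le_zero_iff.1 ((hmax hy').trans hM)⟩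
  have hopen' : IsOpen (V ∩ G ⁻¹' {0}ᶜ) := hGc.isOpen_inter_preimage hV isOpen_compl_singleton
  have := hc.subset_left_of_subset_union hopen hopen'
    (Set.disjoint_left.2 fun y hy hy' => hy'.2 hy.2)
    (fun y hy => by
      by_cases h : G y = 0
      · exact Or.inl ⟨hy, h⟩
      · exact Or.inr ⟨hy, h⟩) ⟨x, hx, hx, h0⟩
  exact fun y hy => (this hy).2

/-! ### One-jets of solutions -/

section Solutions

variable {n : ℕ} {V : Set (Fin n → ℝ)} {Γ : Fin n → Fin n → Fin n → (Fin n → ℝ) → ℝ} {μ : ℝ}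

lemma pd_pd_of_mem_solSet {h : (Fin n → ℝ) → ℝ} (hh : h ∈ solSet V Γ μ) {y : Fin n → ℝ}
    (hy : y ∈ V) (i j : Fin n) :
    pd i (pd j h) y = ∑ k, Γ i j k y * pd k h y + μ * (h y * ricciSymD Γ i j y) := by
  have := hh.2 y hy i j
  simp only [hessD] at this
  linarith

/-- The 1-jet `(h x, (∂ᵢh x)ᵢ)` of a function at a point. -/
noncomputable def jet (x : Fin n → ℝ) (h : (Fin n → ℝ) → ℝ) : ℝ × (Fin n → ℝ) :=
  (h x, fun i => pd i h x)

/-- A solution on a connected open set whose 1-jet vanishes at one point is identically zero. -/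
lemma jet_eq_zero (hV : IsOpen V) (hc : IsPreconnected V)
    (hΓ : ∀ i j k, ContDiffOn ℝ ∞ (Γ i j k) V) {h : (Fin n → ℝ) → ℝ} (hh : h ∈ solSet V Γ μ)
    {x : Fin n → ℝ} (hx : x ∈ V) (h0 : jet x h = 0) : ∀ y ∈ V, h y = 0 := by
  let c : (Fin n → ℝ) → ℝ := fun y =>
    ∑ i : Fin n, (1 + ∑ j, (∑ k, |Γ i j k y| + |μ| * |ricciSymD Γ i j y|))
  have hcc : ContinuousOn c V := by
    refine continuousOn_finsetSum _ fun i _ => continuousOn_const.add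
      (continuousOn_finsetSum _ fun j _ => (continuousOn_finsetSum _ fun k _ => ?_).add
        (continuousOn_const.mul ?_))
    · exact (hΓ i j k).continuousOn.abs
    · exact (contDiffOn_ricciSymD hV hΓ i j).continuousOn.abs
  have hder : ∀ y ∈ V, HasFDerivAt (fun y => jet y h)
      ((fderiv ℝ h y).prod (ContinuousLinearMap.pi fun j => fderiv ℝ (pd j h) y)) y := by
    intro y hy
    refine (differentiableAt_of_contDiffOn hV hh.1 hy).hasFDerivAt.prodMk (hasFDerivAt_pi.2 ?_)
    exact fun j => (differentiableAt_of_contDiffOn hV (contDiffOn_pd hV hh.1 j) hy).hasFDerivAt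
  have hb : ∀ y ∈ V, ‖fderiv ℝ (fun y => jet y h) y‖ ≤ c y * ‖jet y h‖ := by
    intro y hy
    refine (opNorm_le_sum_single _).trans ?_
    rw [Finset.sum_mul]
    refine Finset.sum_le_sum fun i _ => ?_
    rw [(hder y hy).fderiv]
    have hq : ∀ k, |pd k h y| ≤ ‖jet y h‖ := fun k =>
      (norm_le_pi_norm (jet y h).2 k).trans (norm_snd_le _)
    have hf : |h y| ≤ ‖jet y h‖ := norm_fst_le (jet y h)
    have hN : ∀ j, 0 ≤ (∑ k, |Γ i j k y| + |μ| * |ricciSymD Γ i j y|) := fun j => by positivity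
    have hN' : 0 ≤ ∑ j, (∑ k, |Γ i j k y| + |μ| * |ricciSymD Γ i j y|) :=
      Finset.sum_nonneg fun j _ => hN j
    refine norm_prod_le_iff.2 ⟨?_, (pi_norm_le_iff_of_nonneg (by positivity)).2 fun j => ?_⟩
    · change |pd i h y| ≤ _
      nlinarith [hq i, norm_nonneg (jet y h)]
    · change |pd i (pd j h) y| ≤ _
      rw [pd_pd_of_mem_solSet hh hy]
      calc |∑ k, Γ i j k y * pd k h y + μ * (h y * ricciSymD Γ i j y)|
          ≤ ∑ k, |Γ i j k y * pd k h y| + |μ * (h y * ricciSymD Γ i j y)| :=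
            (abs_add_le _ _).trans (by gcongr; exact Finset.abs_sum_le_sum_abs _ _)
        _ ≤ ∑ k, |Γ i j k y| * ‖jet y h‖ + |μ| * (‖jet y h‖ * |ricciSymD Γ i j y|) := by
            simp only [abs_mul]
            gcongr with k
            exact hq k
        _ = (∑ k, |Γ i j k y| + |μ| * |ricciSymD Γ i j y|) * ‖jet y h‖ := by
            rw [add_mul, Finset.sum_mul]; ring
        _ ≤ (1 + ∑ j, (∑ k, |Γ i j k y| + |μ| * |ricciSymD Γ i j y|)) * ‖jet y h‖ := by
            refine mul_le_mul_of_nonneg_right ?_ (norm_nonneg _)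
            have := Finset.single_le_sum (fun j _ => hN j) (Finset.mem_univ j)
            linarith
  have := eq_zero_of_norm_fderiv_le hV hc (fun y hy => (hder y hy).differentiableAt) hcc hb hx h0
  exact fun y hy => congrArg Prod.fst (this y hy)

/-- The solution set on an open set, as a subspace of the functions on `ℝⁿ` (whose values
outside `V` are arbitrary). -/
noncomputable def solSubmodule (hV : IsOpen V) (Γ : Fin n → Fin n → Fin n → (Fin n → ℝ) → ℝ)
    (μ : ℝ) : Submodule ℝ ((Fin n → ℝ) → ℝ) where
  carrier := solSet V Γ μ
  zero_mem' := by
    refine ⟨contDiffOn_const, fun x _ i j => ?_⟩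
    have h0 : ∀ k : Fin n, pd k (0 : (Fin n → ℝ) → ℝ) = 0 := fun k => by
      funext y; simp [pd]
    simp [hessD, h0]
  add_mem' := by
    intro f g hf hg
    refine ⟨hf.1.add hg.1, fun x hx i j => ?_⟩
    have h1 : ∀ y ∈ V, ∀ k, pd k (f + g) y = pd k f y + pd k g y := fun y hy k =>
      pd_add (differentiableAt_of_contDiffOn hV hf.1 hy)
        (differentiableAt_of_contDiffOn hV hg.1 hy) k
    have h2 : pd i (pd j (f + g)) x = pd i (pd j f) x + pd i (pd j g) x := by
      rw [pd_congr hV hx (fun y hy => h1 y hy j)]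
      exact pd_add (differentiableAt_of_contDiffOn hV (contDiffOn_pd hV hf.1 j) hx)
        (differentiableAt_of_contDiffOn hV (contDiffOn_pd hV hg.1 j) hx) i
    have ef := hf.2 x hx i j
    have eg := hg.2 x hx i j
    simp only [hessD] at ef eg ⊢
    simp only [h2, h1 x hx, mul_add, Finset.sum_add_distrib, Pi.add_apply]
    linarith
  smul_mem' := by
    intro c f hf
    refine ⟨contDiffOn_const.smul hf.1, fun x hx i j => ?_⟩
    have h1 : ∀ y ∈ V, ∀ k, pd k (c • f) y = c * pd k f y := fun y hy k =>
      pd_const_mul (differentiableAt_of_contDiffOn hV hf.1 hy) c k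
    have h2 : pd i (pd j (c • f)) x = c * pd i (pd j f) x := by
      rw [pd_congr hV hx (fun y hy => h1 y hy j)]
      exact pd_const_mul (differentiableAt_of_contDiffOn hV (contDiffOn_pd hV hf.1 j) hx) c i
    have ef := hf.2 x hx i j
    simp only [hessD] at ef ⊢
    have h3 : ∑ k, Γ i j k x * (c * pd k f x) = c * ∑ k, Γ i j k x * pd k f x := by
      rw [Finset.mul_sum]; exact Finset.sum_congr rfl fun k _ => by ring
    simp only [h2, h1 x hx, h3, Pi.smul_apply, smul_eq_mul]
    linear_combination c * ef

/-- Evaluation of the 1-jet at a point of `V`, as a linear map on solutions. -/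
noncomputable def jetMap (hV : IsOpen V) (Γ : Fin n → Fin n → Fin n → (Fin n → ℝ) → ℝ)
    (μ : ℝ) {x : Fin n → ℝ} (hx : x ∈ V) :
    solSubmodule hV Γ μ →ₗ[ℝ] ℝ × (Fin n → ℝ) where
  toFun h := jet x h.1
  map_add' f g := Prod.ext rfl <| funext fun i =>
    pd_add (differentiableAt_of_contDiffOn hV f.2.1 hx)
      (differentiableAt_of_contDiffOn hV g.2.1 hx) i
  map_smul' c f := Prod.ext rfl <| funext fun i =>
    pd_const_mul (differentiableAt_of_contDiffOn hV f.2.1 hx) c i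

/-- If the solution space has dimension `n + 1`, every 1-jet at a point of `V` is the 1-jet of a
solution: restriction to `V` factors through the 1-jet by unique continuation, so the space of
realised 1-jets has dimension at least `n + 1`. -/
lemma exists_solution (hV : IsOpen V) (hc : IsPreconnected V)
    (hΓ : ∀ i j k, ContDiffOn ℝ ∞ (Γ i j k) V)
    (hdim : Module.rank ℝ ↥(Submodule.span ℝ (V.restrict '' solSet V Γ μ)) =
      (n : Cardinal) + 1)
    {x : Fin n → ℝ} (hx : x ∈ V) (w : ℝ × (Fin n → ℝ)) :
    ∃ h ∈ solSet V Γ μ, jet x h = w := by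
  let J := jetMap hV Γ μ hx
  let R : solSubmodule hV Γ μ →ₗ[ℝ] (V → ℝ) :=
    { toFun := fun h => V.restrict h.1, map_add' := fun _ _ => rfl, map_smul' := fun _ _ => rfl }
  have hR : LinearMap.range R = Submodule.span ℝ (V.restrict '' solSet V Γ μ) := by
    have : V.restrict '' solSet V Γ μ = (LinearMap.range R : Set (V → ℝ)) := by
      ext g
      constructor
      · rintro ⟨h, hh, rfl⟩
        exact ⟨⟨h, hh⟩, rfl⟩
      · rintro ⟨h, rfl⟩
        exact ⟨h.1, h.2, rfl⟩
    rw [this, Submodule.span_eq]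
  have hker : LinearMap.ker J ≤ LinearMap.ker R := fun h hh =>
    funext fun y => jet_eq_zero hV hc hΓ h.2 hx hh y.1 y.2
  have hle : Module.rank ℝ (LinearMap.range R) ≤ Module.rank ℝ (LinearMap.range J) := by
    rw [← Submodule.range_liftQ _ R hker, ← J.quotKerEquivRange.rank_eq]
    exact rank_range_le _
  rw [hR, hdim, ← Module.finrank_eq_rank ℝ (LinearMap.range J)] at hle
  have hle' : n + 1 ≤ Module.finrank ℝ (LinearMap.range J) := by exact_mod_cast hle
  have htop : LinearMap.range J = ⊤ := by
    apply Submodule.eq_top_of_finrank_eq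
    refine le_antisymm (Submodule.finrank_le _) ?_
    simpa [Module.finrank_prod, add_comm] using hle'
  obtain ⟨h, hh⟩ := LinearMap.range_eq_top.1 htop w
  exact ⟨h.1, h.2, hh⟩

/-! ### Integrability conditions -/

/-- The `l, i`-symmetry of the third derivatives of a solution with `h x = 0`, `∂ₖh x = δₖₘ`. -/
lemma integrability (hV : IsOpen V) (hΓ : ∀ i j k, ContDiffOn ℝ ∞ (Γ i j k) V)
    {h : (Fin n → ℝ) → ℝ} (hh : h ∈ solSet V Γ μ) {x : Fin n → ℝ} (hx : x ∈ V) {m : Fin n}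
    (hj : jet x h = (0, Pi.single m 1)) (l i j : Fin n) :
    pd l (Γ i j m) x + ∑ k, Γ i j k x * Γ l k m x
        + μ * ((if l = m then 1 else 0) * ricciSymD Γ i j x) =
      pd i (Γ l j m) x + ∑ k, Γ l j k x * Γ i k m x
        + μ * ((if i = m then 1 else 0) * ricciSymD Γ l j x) := by
  have h0 : h x = 0 := congrArg Prod.fst hj
  have hq : ∀ k, pd k h x = if k = m then 1 else 0 := fun k => by
    have : pd k h x = (Pi.single m (1 : ℝ) : Fin n → ℝ) k := congrFun (congrArg Prod.snd hj) k
    rw [this, Pi.single_apply]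
  have key : ∀ a b, pd a (pd b (pd j h)) x = pd a (Γ b j m) x + ∑ k, Γ b j k x * Γ a k m x
      + μ * ((if a = m then 1 else 0) * ricciSymD Γ b j x) := by
    intro a b
    have dΓ : ∀ k, DifferentiableAt ℝ (Γ b j k) x := fun k =>
      differentiableAt_of_contDiffOn hV (hΓ b j k) hx
    have dq : ∀ k, DifferentiableAt ℝ (pd k h) x := fun k =>
      differentiableAt_of_contDiffOn hV (contDiffOn_pd hV hh.1 k) hx
    have dS : DifferentiableAt ℝ (ricciSymD Γ b j) x :=
      differentiableAt_of_contDiffOn hV (contDiffOn_ricciSymD hV hΓ b j) hx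
    have dh := differentiableAt_of_contDiffOn hV hh.1 hx
    have dΓq : ∀ k, DifferentiableAt ℝ (fun y => Γ b j k y * pd k h y) x :=
      fun k => (dΓ k).fun_mul (dq k)
    have hqq : ∀ k, pd a (pd k h) x = Γ a k m x := fun k => by
      rw [pd_pd_of_mem_solSet hh hx]
      simp [h0, hq]
    rw [pd_congr hV hx (fun y hy => pd_pd_of_mem_solSet hh hy b j),
      pd_add (DifferentiableAt.fun_sum fun k _ => dΓq k) ((dh.fun_mul dS).const_mul μ),
      pd_sum dΓq, pd_const_mul (dh.fun_mul dS), pd_mul dh dS]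
    simp only [fun k => pd_mul (dΓ k) (dq k) a, hqq, hq, h0, Finset.sum_add_distrib]
    simp
  rw [← key l i, ← key i l]
  exact pd_comm hV (contDiffOn_pd hV hh.1 j) hx l i

/-- The trace over `m = l` of the integrability conditions. -/
lemma ricci_add (hV : IsOpen V) (hc : IsPreconnected V)
    (hΓ : ∀ i j k, ContDiffOn ℝ ∞ (Γ i j k) V)
    (hdim : Module.rank ℝ ↥(Submodule.span ℝ (V.restrict '' solSet V Γ μ)) =
      (n : Cardinal) + 1)
    {x : Fin n → ℝ} (hx : x ∈ V) (i j : Fin n) :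
    ricciD Γ i j x + μ * ((n : ℝ) - 1) * ricciSymD Γ i j x = 0 := by
  choose h hh hj using fun m : Fin n => exists_solution hV hc hΓ hdim hx (0, Pi.single m 1)
  have hs := Finset.sum_congr (rfl : (Finset.univ : Finset (Fin n)) = _)
    fun m _ => integrability hV hΓ (hh m) hx (hj m) m i j
  simp only [Finset.sum_add_distrib, if_true, one_mul, Finset.sum_const, Finset.card_univ,
    Fintype.card_fin, nsmul_eq_mul, ← Finset.mul_sum, ite_mul, zero_mul, Finset.sum_ite_eq,
    Finset.mem_univ] at hs
  have hr : ricciD Γ i j x = ∑ m, pd m (Γ i j m) x - ∑ m, pd i (Γ m j m) x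
      + (∑ m, ∑ k, Γ i j k x * Γ m k m x - ∑ m, ∑ k, Γ m j k x * Γ i k m x) := by
    simp only [ricciD, Finset.sum_sub_distrib, mul_comm]
  rw [hr]
  linear_combination hs

end Solutions

/-- if for some `μ ≠ −1/(n−1)` the solution space of the affine
quasi-Einstein equation has the maximal dimension `n+1` on some connected open
neighborhood of `p`, then the Ricci tensor vanishes near `p`. -/
theorem statement7 {n : ℕ} (hn : 2 ≤ n) (U : Set (Fin n → ℝ)) (hU : IsOpen U)
    (Γ : Fin n → Fin n → Fin n → (Fin n → ℝ) → ℝ)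
    (hΓ : ∀ i j k, ContDiffOn ℝ ∞ (Γ i j k) U)
    (hΓsym : ∀ i j k, Γ i j k = Γ j i k)
    (p : Fin n → ℝ) (hp : p ∈ U) (μ : ℝ) (hμ : μ ≠ -1 / ((n : ℝ) - 1))
    (hdim : ∃ V : Set (Fin n → ℝ), V ⊆ U ∧ IsOpen V ∧ IsConnected V ∧ p ∈ V ∧
      Module.rank ℝ ↥(Submodule.span ℝ (V.restrict '' solSet V Γ μ)) = (n : Cardinal) + 1) :
    ∃ W : Set (Fin n → ℝ), W ⊆ U ∧ IsOpen W ∧ p ∈ W ∧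
      ∀ x ∈ W, ∀ i j, ricciD Γ i j x = 0 := by
  obtain ⟨V, hVU, hV, hc, hpV, hdim⟩ := hdim
  refine ⟨V, hVU, hV, hpV, fun x hx i j => ?_⟩
  have hΓV : ∀ i j k, ContDiffOn ℝ ∞ (Γ i j k) V := fun i j k => (hΓ i j k).mono hVU
  have h1 := ricci_add hV hc.isPreconnected hΓV hdim hx i j
  have h2 := ricci_add hV hc.isPreconnected hΓV hdim hx j i
  have hn1 : (n : ℝ) - 1 ≠ 0 := by
    have : (2 : ℝ) ≤ n := by exact_mod_cast hn
    linarith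
  have hS : (1 + μ * ((n : ℝ) - 1)) * ricciSymD Γ i j x = 0 := by
    simp only [ricciSymD] at h1 h2 ⊢
    linear_combination (h1 + h2) / 2
  have hne : 1 + μ * ((n : ℝ) - 1) ≠ 0 := fun h => hμ (by
    rw [eq_div_iff hn1]; linarith)
  rw [(mul_eq_zero.1 hS).resolve_left hne] at h1
  simpa using h1
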